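/- Let A be a unital C*-algebra, H₁ a Hilbert space, and [φ_ij]_{i,j=1}^n : A → L(H₁) a completely n-positive map. Suppose (π,S₁,…,S_n,K₁) and (π′,S₁′,…,S_n′,K₁′) are two data where K₁,K₁′ are Hilbert spaces, π : A → L(K₁) and π′ : A → L(K₁′) are unital *-homomorphisms, Sᵢ : H₁ → K₁ and Sᵢ′ : H₁ → K₁′ are bounded operators with φ_ij(a) = Sᵢ* π(a) Sⱼ = Sᵢ′* π′(a) Sⱼ′ for all a ∈ A and all i,j, and both are minimal in the sense that K₁ is the closed linear span of ⋃_{i=1}^n π(A)Sᵢ(H₁) and K₁′ is the closed linear span of ⋃_{i=1}^n π′(A)Sᵢ′(H₁). Then there exists a unitary operator U₁ : K₁ → K₁′ such that U₁Sᵢ = Sᵢ′ for all i ∈ {1,…,n} and U₁π(a) = π′(a)U₁ for all a ∈ A. -/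

import Mathlib

noncomputable section

open scoped InnerProductSpace RightActions ComplexOrder
open ContinuousLinearMap

/-- A square matrix over a ⋆-ring is *positive* if it factors as `star N * N`
(in a C⋆-algebra, such as a matrix algebra over a C⋆-algebra, this is exactly
positivity). -/
def Matrix.IsPosMat {R : Type*} [NonUnitalSemiring R] [StarRing R] {m : ℕ}
    (M : Matrix (Fin m) (Fin m) R) : Prop :=
  ∃ N, M = star N * N

/-- A linear map between ⋆-algebras is *completely positive* if all of its matrix
amplifications `[a_kl] ↦ [φ (a_kl)]` send positive matrices to positive matrices. -/
def IsCompletelyPositive {A B : Type*} [NonUnitalRing A] [StarRing A] [Module ℂ A]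
    [NonUnitalRing B] [StarRing B] [Module ℂ B] (φ : A →ₗ[ℂ] B) : Prop :=
  ∀ (m : ℕ) (M : Matrix (Fin m) (Fin m) A), M.IsPosMat → (M.map φ).IsPosMat

/-- The map `[a_ij] ↦ [φ_ij (a_ij)]` on `n × n` matrices induced by a matrix
`[φ_ij]` of linear maps, bundled as a linear map. -/
def entrywiseMap {A B : Type*} [NonUnitalRing A] [StarRing A] [Module ℂ A]
    [NonUnitalRing B] [StarRing B] [Module ℂ B] {n : ℕ}
    (φ : Fin n → Fin n → (A →ₗ[ℂ] B)) :
    Matrix (Fin n) (Fin n) A →ₗ[ℂ] Matrix (Fin n) (Fin n) B where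
  toFun M := Matrix.of fun i j => φ i j (M i j)
  map_add' M N := by ext i j; simp
  map_smul' c M := by ext i j; simp

/-- An `n × n` matrix `[φ_ij]` of linear maps is *completely `n`-positive* if the induced
map `[a_ij] ↦ [φ_ij (a_ij)]` on `n × n` matrices is completely positive. -/
def IsCompletelyNPositive {A B : Type*} [NonUnitalRing A] [StarRing A] [Module ℂ A]
    [NonUnitalRing B] [StarRing B] [Module ℂ B] {n : ℕ}
    (φ : Fin n → Fin n → (A →ₗ[ℂ] B)) : Prop :=
  IsCompletelyPositive (entrywiseMap φ)

/-!
The inner products of the spanning vectors are determined by `[φ_ij]`: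
`⟪π(a) Sᵢ ξ, π(b) Sⱼ η⟫ = ⟪ξ, Sᵢ⋆ π(a⋆ b) Sⱼ η⟫ = ⟪ξ, φ_ij(a⋆ b) η⟫`.
Two families with the same inner products and dense spans correspond under a unitary, here
`π(a) Sᵢ ξ ↦ π'(a) Sᵢ' ξ`. Taking `a = 1` gives `U₁ Sᵢ = Sᵢ'`, and left multiplication on the
parameter `a` gives the intertwining relation on a total set.
-/

section InnerProductSpace

variable {𝕜 ι E F : Type*} [RCLike 𝕜]

theorem inner_linearCombination_eq_of_inner_eq
    [SeminormedAddCommGroup E] [InnerProductSpace 𝕜 E]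
    [SeminormedAddCommGroup F] [InnerProductSpace 𝕜 F]
    {f : ι → E} {g : ι → F} (h : ∀ i j, ⟪f i, f j⟫_𝕜 = ⟪g i, g j⟫_𝕜) (c d : ι →₀ 𝕜) :
    ⟪Finsupp.linearCombination 𝕜 f c, Finsupp.linearCombination 𝕜 f d⟫_𝕜 =
      ⟪Finsupp.linearCombination 𝕜 g c, Finsupp.linearCombination 𝕜 g d⟫_𝕜 := by
  simp only [Finsupp.linearCombination_apply, Finsupp.sum_inner, Finsupp.inner_sum,
    inner_smul_left, inner_smul_right, h]

theorem exists_linearIsometryEquiv_of_inner_eq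
    [NormedAddCommGroup E] [InnerProductSpace 𝕜 E] [CompleteSpace E]
    [NormedAddCommGroup F] [InnerProductSpace 𝕜 F] [CompleteSpace F]
    {f : ι → E} {g : ι → F} (h : ∀ i j, ⟪f i, f j⟫_𝕜 = ⟪g i, g j⟫_𝕜)
    (hf : Dense (Submodule.span 𝕜 (Set.range f) : Set E))
    (hg : Dense (Submodule.span 𝕜 (Set.range g) : Set F)) :
    ∃ U : E ≃ₗᵢ[𝕜] F, ∀ i, U (f i) = g i := by
  rw [← Finsupp.range_linearCombination, LinearMap.coe_range] at hf hg
  have norm_eq (c : ι →₀ 𝕜) :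
      ‖Finsupp.linearCombination 𝕜 g c‖ = ‖Finsupp.linearCombination 𝕜 f c‖ := by
    simp only [norm_eq_sqrt_re_inner (𝕜 := 𝕜), inner_linearCombination_eq_of_inner_eq h]
  refine ⟨(LinearEquiv.refl 𝕜 (ι →₀ 𝕜)).extendOfIsometry _ _ hf hg norm_eq, fun i => ?_⟩
  simpa using LinearEquiv.extendOfIsometry_eq (.refl 𝕜 (ι →₀ 𝕜)) _ _ hf hg norm_eq
    (Finsupp.single i 1)

end InnerProductSpace

theorem intertwines_of_eq_on_orbits {R A ι M N Φ Ψ : Type*} [Semiring R] [Mul A]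
    [TopologicalSpace M] [AddCommMonoid M] [Module R M]
    [TopologicalSpace N] [AddCommMonoid N] [Module R N] [T2Space N]
    [FunLike Φ A (M →L[R] M)] [MulHomClass Φ A (M →L[R] M)]
    [FunLike Ψ A (N →L[R] N)] [MulHomClass Ψ A (N →L[R] N)]
    {π : Φ} {ρ : Ψ} {x : ι → M} {y : ι → N}
    (hx : Dense (Submodule.span R (Set.range fun p : A × ι => π p.1 (x p.2)) : Set M))
    {T : M →L[R] N} (hT : ∀ a i, T (π a (x i)) = ρ a (y i)) (a : A) :
    T ∘L π a = ρ a ∘L T := by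
  refine ContinuousLinearMap.ext_on hx ?_
  rintro _ ⟨⟨b, i⟩, rfl⟩
  calc T (π a (π b (x i))) = T (π (a * b) (x i)) := by rw [map_mul, mul_apply_eq_comp]
    _ = ρ (a * b) (y i) := hT _ _
    _ = ρ a (T (π b (x i))) := by rw [map_mul, mul_apply_eq_comp, hT]

section StarRepresentation

variable {𝕜 A ι K K' : Type*} [RCLike 𝕜] [Monoid A] [Star A]
  [NormedAddCommGroup K] [InnerProductSpace 𝕜 K] [CompleteSpace K]
  [NormedAddCommGroup K'] [InnerProductSpace 𝕜 K'] [CompleteSpace K']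

theorem inner_starRepresentation_apply_apply (π : A →⋆* (K →L[𝕜] K)) (a b : A) (v w : K) :
    ⟪π a v, π b w⟫_𝕜 = ⟪v, π (star a * b) w⟫_𝕜 := by
  rw [map_mul, map_star, star_eq_adjoint, mul_apply_eq_comp, adjoint_inner_right]

theorem exists_intertwining_linearIsometryEquiv_of_inner_eq
    (π : A →⋆* (K →L[𝕜] K)) (π' : A →⋆* (K' →L[𝕜] K')) {x : ι → K} {x' : ι → K'}
    (hcoeff : ∀ a i j, ⟪x i, π a (x j)⟫_𝕜 = ⟪x' i, π' a (x' j)⟫_𝕜)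
    (hx : Dense (Submodule.span 𝕜 (Set.range fun p : A × ι => π p.1 (x p.2)) : Set K))
    (hx' : Dense (Submodule.span 𝕜 (Set.range fun p : A × ι => π' p.1 (x' p.2)) : Set K')) :
    ∃ U : K ≃ₗᵢ[𝕜] K', (∀ i, U (x i) = x' i) ∧ ∀ a v, U (π a v) = π' a (U v) := by
  have inner_eq (p q : A × ι) :
      ⟪π p.1 (x p.2), π q.1 (x q.2)⟫_𝕜 = ⟪π' p.1 (x' p.2), π' q.1 (x' q.2)⟫_𝕜 := by
    simp only [inner_starRepresentation_apply_apply, hcoeff]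
  obtain ⟨U, hU⟩ := exists_linearIsometryEquiv_of_inner_eq inner_eq hx hx'
  have map_orbit (a : A) (i : ι) : U (π a (x i)) = π' a (x' i) := hU (a, i)
  have intertwines (a : A) : (U : K →L[𝕜] K') ∘L π a = π' a ∘L (U : K →L[𝕜] K') :=
    intertwines_of_eq_on_orbits hx map_orbit a
  exact ⟨U, fun i => by simpa using map_orbit 1 i,
    fun a v => DFunLike.congr_fun (intertwines a) v⟩

end StarRepresentation

theorem setOf_exists_eq_range_prod {ι A H K L : Type*} (T : A → K → L) (S : ι → H → K) :
    {v : L | ∃ (i : ι) (a : A) (ξ : H), v = T a (S i ξ)} =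
      Set.range fun p : A × ι × H => T p.1 (S p.2.1 p.2.2) := by
  ext v
  simp only [Set.mem_ofPred_eq, Set.mem_range, Prod.exists, eq_comm (a := v)]
  exact exists_comm

theorem minimal_stinespring_data_unitarily_equivalent_general
    {𝕜 A ι H K K' : Type*} [RCLike 𝕜] [Monoid A] [Star A]
    [NormedAddCommGroup H] [InnerProductSpace 𝕜 H] [CompleteSpace H]
    [NormedAddCommGroup K] [InnerProductSpace 𝕜 K] [CompleteSpace K]
    [NormedAddCommGroup K'] [InnerProductSpace 𝕜 K'] [CompleteSpace K']
    (π : A →⋆* (K →L[𝕜] K)) (S : ι → (H →L[𝕜] K))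
    (π' : A →⋆* (K' →L[𝕜] K')) (S' : ι → (H →L[𝕜] K'))
    (hfact : ∀ (a : A) (i j : ι),
      adjoint (S i) ∘L π a ∘L S j = adjoint (S' i) ∘L π' a ∘L S' j)
    (hmin : (Submodule.span 𝕜
      {v : K | ∃ (i : ι) (a : A) (ξ : H), v = π a (S i ξ)}).topologicalClosure = ⊤)
    (hmin' : (Submodule.span 𝕜
      {v : K' | ∃ (i : ι) (a : A) (ξ : H), v = π' a (S' i ξ)}).topologicalClosure = ⊤) :
    ∃ U : K ≃ₗᵢ[𝕜] K',
      (∀ (i : ι) (ξ : H), U (S i ξ) = S' i ξ) ∧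
      (∀ (a : A) (v : K), U (π a v) = π' a (U v)) := by
  rw [setOf_exists_eq_range_prod (π ·) (S ·),
    ← Submodule.dense_iff_topologicalClosure_eq_top] at hmin
  rw [setOf_exists_eq_range_prod (π' ·) (S' ·),
    ← Submodule.dense_iff_topologicalClosure_eq_top] at hmin'
  have hcoeff (a : A) (p q : ι × H) :
      ⟪S p.1 p.2, π a (S q.1 q.2)⟫_𝕜 = ⟪S' p.1 p.2, π' a (S' q.1 q.2)⟫_𝕜 := by
    simpa only [comp_apply, adjoint_inner_right] using
      congrArg (fun T : H →L[𝕜] H => ⟪p.2, T q.2⟫_𝕜) (hfact a p.1 q.1)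
  obtain ⟨U, hUS, hUπ⟩ := exists_intertwining_linearIsometryEquiv_of_inner_eq π π' hcoeff hmin hmin'
  exact ⟨U, fun i ξ => hUS (i, ξ), hUπ⟩

/-- Two minimal data `(π, S₁, …, S_n, K₁)` and `(π', S₁', …, S_n', K₁')`
realizing the same completely `n`-positive map `[φ_ij]` via
`φ_ij(a) = Sᵢ⋆ π(a) Sⱼ = Sᵢ'⋆ π'(a) Sⱼ'` are unitarily equivalent. -/
theorem minimal_stinespring_data_unitarily_equivalent
    {A : Type*} [CStarAlgebra A]
    {H₁ : Type*} [NormedAddCommGroup H₁] [InnerProductSpace ℂ H₁] [CompleteSpace H₁]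
    {K₁ : Type*} [NormedAddCommGroup K₁] [InnerProductSpace ℂ K₁] [CompleteSpace K₁]
    {K₁' : Type*} [NormedAddCommGroup K₁'] [InnerProductSpace ℂ K₁'] [CompleteSpace K₁']
    {n : ℕ} (φ : Fin n → Fin n → (A →ₗ[ℂ] (H₁ →L[ℂ] H₁)))
    (hφ : IsCompletelyNPositive φ)
    (π : A →⋆ₐ[ℂ] (K₁ →L[ℂ] K₁)) (S : Fin n → (H₁ →L[ℂ] K₁))
    (π' : A →⋆ₐ[ℂ] (K₁' →L[ℂ] K₁')) (S' : Fin n → (H₁ →L[ℂ] K₁'))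
    (hfact : ∀ (a : A) (i j : Fin n), φ i j a = adjoint (S i) ∘L π a ∘L S j)
    (hfact' : ∀ (a : A) (i j : Fin n), φ i j a = adjoint (S' i) ∘L π' a ∘L S' j)
    (hmin : (Submodule.span ℂ
      {v : K₁ | ∃ (i : Fin n) (a : A) (ξ : H₁), v = π a (S i ξ)}).topologicalClosure = ⊤)
    (hmin' : (Submodule.span ℂ
      {v : K₁' | ∃ (i : Fin n) (a : A) (ξ : H₁), v = π' a (S' i ξ)}).topologicalClosure = ⊤) :
    ∃ U₁ : K₁ ≃ₗᵢ[ℂ] K₁',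
      (∀ (i : Fin n) (ξ : H₁), U₁ (S i ξ) = S' i ξ) ∧
      (∀ (a : A) (v : K₁), U₁ (π a v) = π' a (U₁ v)) := by
  exact minimal_stinespring_data_unitarily_equivalent_general (.ofClass π) S (.ofClass π') S'
    (fun a i j => (hfact a i j).symm.trans (hfact' a i j)) hmin hmin'
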